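/- Let 0 < β_L ≤ β_R, T_L = 1/β_L, T_R = 1/β_R, and κ = (√(πβ_L/2) + √(πβ_R/2))^{−1}. For λ ∈ (0, β_L) let f(λ) be the unique η > 0 with F(λ, η) = 1, and for λ ∈ (−β_R, β_L−β_R) define f(λ) likewise. Then the derivative f' is a bijection from (0, β_L) onto (κ(T_L − T_R), +∞), and f' is a bijection from (−β_R, β_L − β_R) onto (−∞, −κ(T_L − T_R)). -/

import Mathlib

open MeasureTheory Filter

/-- `C(x,η) = ∫₀^∞ v e^{−η/v − x v²/2} dv`. -/
noncomputable def Ccal (x η : ℝ) : ℝ :=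
  ∫ v in Set.Ioi (0 : ℝ), v * Real.exp (-η / v - x * v ^ 2 / 2)

/-- `F(λ,η) = β_L β_R C(β_R+λ, η) C(β_L−λ, η)`. -/
noncomputable def Fcal (βL βR lam η : ℝ) : ℝ :=
  βL * βR * Ccal (βR + lam) η * Ccal (βL - lam) η

/-!
After multiplication by `v`, the exponential `e^{−η/v − x v²/2}` is the exponential of a
function that is affine in `(x, η)`, so by the strict form of Hölder's inequality `log C`, and
with it `log F`, is strictly convex in both variables jointly. As `F` decreases in `η`, the
curve `F = 1` is therefore the graph of a strictly convex function `f`, and `f'` is injective.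
What is left is to find the range of `f'` on `(0, β_L)`. The curve starts at the origin, where
the one-sided derivative of `log F` along the ray `η = s λ` is `T_L − T_R − s/κ`; hence `f(λ)/λ
→ κ(T_L − T_R)`. At the other end `C(β_L − λ, η) → ∞`, so `f` blows up, and Darboux's theorem
fills in all slopes in between. The symmetry `λ ↦ β_L − β_R − λ` of `F` carries the result over
to the left interval.
-/

open Set Real Topology

lemma integrable_exp_convexComb {α : Type*} [MeasurableSpace α] {μ : Measure α} {g h : α → ℝ}
    (hg : Integrable (fun v => exp (g v)) μ) (hh : Integrable (fun v => exp (h v)) μ)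
    {a b : ℝ} (ha : 0 ≤ a) (hb : 0 ≤ b) (hab : a + b = 1) :
    Integrable (fun v => exp (a * g v + b * h v)) μ := by
  have hgm : AEMeasurable g μ := aemeasurable_of_aemeasurable_exp hg.aemeasurable
  have hhm : AEMeasurable h μ := aemeasurable_of_aemeasurable_exp hh.aemeasurable
  refine ((hg.const_mul a).add (hh.const_mul b)).mono' (by fun_prop) (ae_of_all _ fun v => ?_)
  rw [norm_of_nonneg (exp_pos _).le]
  exact convexOn_exp.2 (mem_univ (g v)) (mem_univ (h v)) ha hb hab

lemma integral_exp_convexComb_lt {α : Type*} [MeasurableSpace α] {μ : Measure α} {g h : α → ℝ}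
    (hg : Integrable (fun v => exp (g v)) μ) (hh : Integrable (fun v => exp (h v)) μ)
    (hgh : ¬ g =ᵐ[μ] h) {a b : ℝ} (ha : 0 < a) (hb : 0 < b) (hab : a + b = 1) :
    ∫ v, exp (a * g v + b * h v) ∂μ < a * ∫ v, exp (g v) ∂μ + b * ∫ v, exp (h v) ∂μ := by
  have hint := integrable_exp_convexComb hg hh ha.le hb.le hab
  have hsum : Integrable (fun v => a * exp (g v) + b * exp (h v)) μ :=
    (hg.const_mul a).add (hh.const_mul b)
  have hle : ∀ v, exp (a * g v + b * h v) ≤ a * exp (g v) + b * exp (h v) := fun v =>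
    convexOn_exp.2 (mem_univ (g v)) (mem_univ (h v)) ha.le hb.le hab
  rw [← integral_const_mul, ← integral_const_mul,
    ← integral_add (hg.const_mul a) (hh.const_mul b)]
  refine (integral_mono hint hsum hle).lt_of_ne fun heq => hgh ?_
  filter_upwards [(integral_eq_iff_of_ae_le hint hsum (ae_of_all _ hle)).1 heq] with v hv
  by_contra hne
  exact (strictConvexOn_exp.2 (mem_univ (g v)) (mem_univ (h v)) hne ha hb hab).ne hv

lemma log_integral_exp_convexComb_lt {α : Type*} [MeasurableSpace α] {μ : Measure α}
    {g h : α → ℝ} (hg : Integrable (fun v => exp (g v)) μ)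
    (hh : Integrable (fun v => exp (h v)) μ) (hgh : ∀ c, ¬ g =ᵐ[μ] fun v => h v + c)
    {a b : ℝ} (ha : 0 < a) (hb : 0 < b) (hab : a + b = 1) :
    log (∫ v, exp (a * g v + b * h v) ∂μ) <
      a * log (∫ v, exp (g v) ∂μ) + b * log (∫ v, exp (h v) ∂μ) := by
  have : NeZero μ := ⟨fun hμ => hgh 0 (by simp [hμ, Filter.EventuallyEq])⟩
  set A := log (∫ v, exp (g v) ∂μ) with hA
  set B := log (∫ v, exp (h v) ∂μ) with hB
  have hint := integrable_exp_convexComb hg hh ha.le hb.le hab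
  have hg_one : ∫ v, exp (g v - A) ∂μ = 1 := by
    simp only [exp_sub, integral_div, hA, exp_log (integral_exp_pos hg)]
    exact div_self (integral_exp_pos hg).ne'
  have hh_one : ∫ v, exp (h v - B) ∂μ = 1 := by
    simp only [exp_sub, integral_div, hB, exp_log (integral_exp_pos hh)]
    exact div_self (integral_exp_pos hh).ne'
  have hne : ¬ (fun v => g v - A) =ᵐ[μ] fun v => h v - B := fun heq =>
    hgh (A - B) (by filter_upwards [heq] with v hv; linarith)
  have hlt : ∫ v, exp (a * (g v - A) + b * (h v - B)) ∂μ < 1 := by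
    have := integral_exp_convexComb_lt (by simpa only [exp_sub] using hg.div_const (exp A))
      (by simpa only [exp_sub] using hh.div_const (exp B)) hne ha hb hab
    rwa [hg_one, hh_one, mul_one, mul_one, hab] at this
  have hfactor (v : α) : exp (a * (g v - A) + b * (h v - B)) =
      exp (a * g v + b * h v) / exp (a * A + b * B) := by
    rw [← exp_sub]; ring_nf
  simp only [hfactor, integral_div] at hlt
  rwa [div_lt_one (exp_pos _), ← log_lt_iff_lt_exp (integral_exp_pos hint)] at hlt

lemma strictConvexOn_of_comp_eq_const {E : Type*} [AddCommGroup E] [Module ℝ E] {s : Set E}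
    {t : Set ℝ} {G : E × ℝ → ℝ} {f : E → ℝ} {c : ℝ} (hG : StrictConvexOn ℝ (s ×ˢ t) G)
    (hanti : ∀ x ∈ s, AntitoneOn (fun y => G (x, y)) t) (hft : ∀ x ∈ s, f x ∈ t)
    (hfG : ∀ x ∈ s, G (x, f x) = c) : StrictConvexOn ℝ s f := by
  have hcomb {x y : E} (hx : x ∈ s) (hy : y ∈ s) {a b : ℝ} (ha : 0 ≤ a) (hb : 0 ≤ b)
      (hab : a + b = 1) : a • x + b • y ∈ s ∧ a • f x + b • f y ∈ t :=
    hG.1 (mk_mem_prod hx (hft x hx)) (mk_mem_prod hy (hft y hy)) ha hb hab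
  refine ⟨fun x hx y hy a b ha hb hab => (hcomb hx hy ha hb hab).1,
    fun x hx y hy hxy a b ha hb hab => ?_⟩
  obtain ⟨hs, ht⟩ := hcomb hx hy ha.le hb.le hab
  have hlt : G (a • x + b • y, a • f x + b • f y) < c := by
    have := hG.2 (mk_mem_prod hx (hft x hx)) (mk_mem_prod hy (hft y hy))
      (fun h => hxy (Prod.ext_iff.1 h).1) ha hb hab
    rwa [hfG x hx, hfG y hy, ← add_smul, hab, one_smul] at this
  exact (hanti _ hs).reflect_lt ht (hft _ hs) (by rwa [hfG _ hs])

lemma hasDerivWithinAt_integral_of_dominated {α E : Type*} [MeasurableSpace α] {μ : Measure α}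
    [NormedAddCommGroup E] [NormedSpace ℝ E] {F : ℝ → α → E} {F' : α → E} {bound : α → ℝ}
    {s : Set ℝ} {a : ℝ} (ha : Integrable (F a) μ) (hF : ∀ y ∈ s, Integrable (F y) μ)
    (hlip : ∀ y ∈ s, ∀ᵐ v ∂μ, ‖F y v - F a v‖ ≤ bound v * |y - a|) (hbound : Integrable bound μ)
    (hF' : ∀ᵐ v ∂μ, HasDerivWithinAt (F · v) (F' v) s a) :
    HasDerivWithinAt (fun y => ∫ v, F y v ∂μ) (∫ v, F' v ∂μ) s a := by
  have hslope : ∀ᶠ y in 𝓝[s \ {a}] a, Integrable (fun v => slope (F · v) a y) μ ∧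
      slope (fun y => ∫ v, F y v ∂μ) a y = ∫ v, slope (F · v) a y ∂μ := by
    filter_upwards [self_mem_nhdsWithin] with y hy
    simp only [slope, vsub_eq_sub]
    exact ⟨((hF y hy.1).sub ha).smul _, by rw [integral_smul, integral_sub (hF y hy.1) ha]⟩
  rw [hasDerivWithinAt_iff_tendsto_slope,
    tendsto_congr' (hslope.mono fun y hy => hy.2)]
  refine tendsto_integral_filter_of_dominated_convergence bound
    (hslope.mono fun y hy => hy.1.aestronglyMeasurable) ?_ hbound
    (hF'.mono fun v hv => hasDerivWithinAt_iff_tendsto_slope.1 hv)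
  filter_upwards [self_mem_nhdsWithin] with y hy
  filter_upwards [hlip y hy.1] with v hv
  have hpos : 0 < |y - a| := abs_pos.2 (sub_ne_zero.2 hy.2)
  rwa [slope, vsub_eq_sub, norm_smul, norm_inv, norm_eq_abs, inv_mul_le_iff₀ hpos, mul_comm]

lemma bijOn_deriv_of_strictConvexOn {f : ℝ → ℝ} {a b m : ℝ} (hab : a < b)
    (hf : StrictConvexOn ℝ (Ico a b) f) (hd : ∀ x ∈ Ioo a b, DifferentiableAt ℝ f x)
    (ha : HasDerivWithinAt f m (Ioi a) a) (hb : Tendsto f (𝓝[<] b) atTop) :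
    BijOn (deriv f) (Ioo a b) (Ioi m) := by
  have haa : a ∈ Ico a b := left_mem_Ico.2 hab
  have hslope_lt {x : ℝ} (hx : x ∈ Ioo a b) : slope f a x < deriv f x :=
    hf.slope_lt_deriv haa (Ioo_subset_Ico_self hx) hx.1 (hd x hx)
  refine ⟨fun x hx => ?_, ?_, fun y hy => ?_⟩
  · exact (hf.lt_slope_of_hasDerivWithinAt_Ioi haa (Ioo_subset_Ico_self hx) hx.1 ha).trans
      (hslope_lt hx)
  · exact ((hf.subset Ioo_subset_Ico_self (convex_Ioo a b)).strictMonoOn_deriv hd).injOn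
  have hlow : ∃ c ∈ Ioo a b, deriv f c < y := by
    have hslope : Tendsto (slope f a) (𝓝[>] a) (𝓝 m) :=
      (hasDerivWithinAt_iff_tendsto_slope' self_notMem_Ioi).1 ha
    obtain ⟨x, hxy, hx⟩ :=
      ((hslope.eventually_lt_const hy).and (Ioo_mem_nhdsGT hab)).exists
    have hcont : ContinuousOn f (Icc a x) := by
      rw [← Ioc_insert_left hx.1.le]
      rintro z (rfl | hz)
      · exact (ha.continuousWithinAt.mono Ioc_subset_Ioi_self).insert
      · exact (hd z ⟨hz.1, hz.2.trans_lt hx.2⟩).continuousAt.continuousWithinAt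
    obtain ⟨c, hc, hderiv⟩ := exists_deriv_eq_slope' f hx.1 hcont fun z hz =>
      (hd z ⟨hz.1, hz.2.trans hx.2⟩).differentiableWithinAt
    exact ⟨c, ⟨hc.1, hc.2.trans hx.2⟩, hderiv ▸ hxy⟩
  have hhigh : ∃ c ∈ Ioo a b, y < deriv f c := by
    obtain ⟨x, hxy, hx⟩ := ((hb.eventually_gt_atTop (|y| * (b - a) + f a)).and
      (Ioo_mem_nhdsLT hab)).exists
    refine ⟨x, hx, lt_of_lt_of_le ?_ (hslope_lt hx).le⟩
    rw [slope_def_field, lt_div_iff₀ (sub_pos.2 hx.1), lt_sub_iff_add_lt]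
    refine lt_of_le_of_lt ?_ hxy
    have : y * (x - a) ≤ |y| * (b - a) :=
      mul_le_mul (le_abs_self y) (by linarith [hx.2]) (sub_pos.2 hx.1).le (abs_nonneg y)
    linarith
  obtain ⟨c, hc, hcy⟩ := hlow
  obtain ⟨d, hd', hyd⟩ := hhigh
  exact (ordConnected_Ioo.image_deriv hd).out ⟨c, hc, rfl⟩ ⟨d, hd', rfl⟩ ⟨hcy.le, hyd.le⟩

lemma bijOn_deriv_of_comp_const_sub {f : ℝ → ℝ} {c : ℝ} {s t : Set ℝ}
    (h : BijOn (deriv fun x => f (c - x)) s t) :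
    BijOn (deriv f) ((c - ·) ⁻¹' s) (Neg.neg ⁻¹' t) := by
  have hsub : BijOn (c - ·) ((c - ·) ⁻¹' s) s := (Equiv.subLeft c).bijOn fun _ => Iff.rfl
  have hneg : BijOn Neg.neg t (Neg.neg ⁻¹' t) := (Equiv.neg ℝ).bijOn fun x => by simp
  refine (hneg.comp (h.comp hsub)).congr fun x _ => ?_
  simp only [Function.comp_apply, deriv_comp_const_sub, sub_sub_cancel, neg_neg]

/-- The logarithm of the integrand of `C(x, η)` at `v > 0`. Up to the term `log v` it is linear in
`(x, η)`, which makes `log C` convex. -/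
noncomputable def logIntegrand (x η v : ℝ) : ℝ := log v - η / v - x * v ^ 2 / 2

lemma exp_logIntegrand {v : ℝ} (hv : 0 < v) (x η : ℝ) :
    exp (logIntegrand x η v) = v * exp (-η / v - x * v ^ 2 / 2) := by
  rw [logIntegrand, sub_sub, sub_eq_add_neg, exp_add, exp_log hv, neg_div, neg_add']

lemma continuousOn_logIntegrand (x η : ℝ) : ContinuousOn (logIntegrand x η) (Ioi 0) := by
  have hne : ∀ v ∈ Ioi (0 : ℝ), v ≠ 0 := fun v hv => hv.ne'
  unfold logIntegrand
  fun_prop (disch := assumption)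

lemma logIntegrand_convexComb {a b : ℝ} (hab : a + b = 1) (x₁ x₂ η₁ η₂ v : ℝ) :
    logIntegrand (a * x₁ + b * x₂) (a * η₁ + b * η₂) v =
      a * logIntegrand x₁ η₁ v + b * logIntegrand x₂ η₂ v := by
  simp only [logIntegrand]
  linear_combination (-log v) * hab

lemma logIntegrand_le {x x' η η' v : ℝ} (hx : x ≤ x') (hη : η ≤ η') (hv : 0 < v) :
    logIntegrand x' η' v ≤ logIntegrand x η v := by
  unfold logIntegrand
  gcongr

lemma eq_of_logIntegrand_sub_const {x₁ x₂ η₁ η₂ c : ℝ}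
    (h : EqOn (logIntegrand x₁ η₁) (fun v => logIntegrand x₂ η₂ v + c) (Ioi 0)) :
    x₁ = x₂ ∧ η₁ = η₂ := by
  have h₁ := h (show (1 : ℝ) ∈ Ioi 0 by norm_num)
  have h₂ := h (show (2 : ℝ) ∈ Ioi 0 by norm_num)
  have h₄ := h (show (4 : ℝ) ∈ Ioi 0 by norm_num)
  simp only [logIntegrand] at h₁ h₂ h₄
  constructor <;> linarith

lemma integrableOn_exp_logIntegrand {x η : ℝ} (hx : 0 < x) (hη : 0 ≤ η) :
    IntegrableOn (fun v => exp (logIntegrand x η v)) (Ioi 0) := by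
  refine Integrable.mono' (integrable_mul_exp_neg_mul_sq (half_pos hx)).integrableOn
    ((continuousOn_logIntegrand x η).rexp.aestronglyMeasurable measurableSet_Ioi)
    (ae_restrict_of_forall_mem measurableSet_Ioi fun v hv => ?_)
  rw [norm_of_nonneg (exp_pos _).le]
  refine (exp_le_exp.2 (logIntegrand_le le_rfl hη hv)).trans_eq ?_
  rw [exp_logIntegrand hv]
  ring_nf

lemma Ccal_eq_integral_exp (x η : ℝ) : Ccal x η = ∫ v in Ioi 0, exp (logIntegrand x η v) :=
  setIntegral_congr_fun measurableSet_Ioi fun _ hv => (exp_logIntegrand hv x η).symm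

lemma Ccal_pos {x η : ℝ} (hx : 0 < x) (hη : 0 ≤ η) : 0 < Ccal x η := by
  have : NeZero (volume.restrict (Ioi (0 : ℝ))) := ⟨by simp⟩
  rw [Ccal_eq_integral_exp]
  exact integral_exp_pos (integrableOn_exp_logIntegrand hx hη)

lemma Ccal_le_Ccal {x x' η η' : ℝ} (hx : 0 < x) (hxx' : x ≤ x') (hη : 0 ≤ η) (hηη' : η ≤ η') :
    Ccal x' η' ≤ Ccal x η := by
  rw [Ccal_eq_integral_exp, Ccal_eq_integral_exp]
  exact setIntegral_mono_on (integrableOn_exp_logIntegrand (hx.trans_le hxx') (hη.trans hηη'))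
    (integrableOn_exp_logIntegrand hx hη) measurableSet_Ioi
    fun v hv => exp_le_exp.2 (logIntegrand_le hxx' hηη' hv)

lemma strictConvexOn_log_Ccal :
    StrictConvexOn ℝ (Ioi 0 ×ˢ Ici 0) fun p : ℝ × ℝ => log (Ccal p.1 p.2) := by
  refine ⟨(convex_Ioi 0).prod (convex_Ici 0), ?_⟩
  rintro ⟨x₁, η₁⟩ ⟨hx₁, hη₁⟩ ⟨x₂, η₂⟩ ⟨hx₂, hη₂⟩ hne a b ha hb hab
  simp only [Prod.smul_mk, Prod.mk_add_mk, smul_eq_mul, Ccal_eq_integral_exp,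
    logIntegrand_convexComb hab]
  refine log_integral_exp_convexComb_lt (integrableOn_exp_logIntegrand hx₁ hη₁)
    (integrableOn_exp_logIntegrand hx₂ hη₂) (fun c hc => hne ?_) ha hb hab
  have heq := Measure.eqOn_open_of_ae_eq hc isOpen_Ioi (continuousOn_logIntegrand x₁ η₁)
    ((continuousOn_logIntegrand x₂ η₂).add continuousOn_const)
  exact Prod.ext_iff.2 (eq_of_logIntegrand_sub_const heq)

lemma Ccal_zero_right {x : ℝ} (hx : 0 < x) : Ccal x 0 = x⁻¹ := by
  have hgauss : ∫ v in Ioi (0 : ℝ), v * exp (-(x / 2 * v ^ 2)) = x⁻¹ := by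
    have h := integral_rpow_mul_exp_neg_mul_rpow (p := 2) (q := 1) (b := x / 2) (by norm_num)
      (by norm_num) (by positivity)
    norm_num [rpow_neg_one] at h
    exact h
  rw [Ccal, ← hgauss]
  refine setIntegral_congr_fun measurableSet_Ioi fun v _ => ?_
  ring_nf

lemma Ccal_eq_div {x : ℝ} (hx : 0 < x) (η : ℝ) : Ccal x η = Ccal 1 (η * √x) / x := by
  have hs : 0 < √x := sqrt_pos.2 hx
  have hsubst := integral_comp_mul_left_Ioi
    (fun v : ℝ => v * exp (-(η * √x) / v - 1 * v ^ 2 / 2)) 0 hs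
  have hintegrand (v : ℝ) : √x * v * exp (-(η * √x) / (√x * v) - 1 * (√x * v) ^ 2 / 2) =
      √x * (v * exp (-η / v - x * v ^ 2 / 2)) := by
    rw [← neg_mul, mul_comm (-η), mul_div_mul_left _ _ hs.ne', mul_pow, sq_sqrt hx.le]
    ring_nf
  simp only [hintegrand, integral_const_mul, mul_zero, smul_eq_mul] at hsubst
  rw [← Ccal, ← Ccal, eq_inv_mul_iff_mul_eq₀ hs.ne', ← mul_assoc, mul_self_sqrt hx.le] at hsubst
  rw [← hsubst, mul_div_cancel_left₀ _ hx.ne']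

lemma abs_mul_exp_neg_div_sub_one_le {v y : ℝ} (hv : 0 < v) (hy : 0 ≤ y) :
    |v * (exp (-y / v) - 1)| ≤ y := by
  have hle : exp (-y / v) ≤ 1 := exp_le_one_iff.2 (div_nonpos_of_nonpos_of_nonneg (by simpa) hv.le)
  rw [abs_of_nonpos (mul_nonpos_of_nonneg_of_nonpos hv.le (by linarith))]
  have hge : v * (1 - exp (-y / v)) ≤ v * (y / v) := by
    gcongr
    linarith [add_one_le_exp (-y / v), neg_div v y]
  rw [mul_div_cancel₀ _ hv.ne'] at hge
  linarith

lemma hasDerivWithinAt_Ccal_zero {x : ℝ} (hx : 0 < x) :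
    HasDerivWithinAt (Ccal x) (-√(π / (2 * x))) (Ici 0) 0 := by
  have hfactor (v y : ℝ) : v * exp (-y / v - x * v ^ 2 / 2) =
      v * exp (-y / v) * exp (-(x / 2) * v ^ 2) := by
    rw [mul_assoc, ← exp_add]; ring_nf
  have hint {y : ℝ} (hy : 0 ≤ y) :
      IntegrableOn (fun v => v * exp (-y / v) * exp (-(x / 2) * v ^ 2)) (Ioi 0) :=
    (integrableOn_exp_logIntegrand hx hy).congr_fun
      (fun v hv => (exp_logIntegrand hv x y).trans (hfactor v y)) measurableSet_Ioi
  have hgauss : ∫ v in Ioi (0 : ℝ), -exp (-(x / 2) * v ^ 2) = -√(π / (2 * x)) := by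
    have hsq : π / (x / 2) = 2 ^ 2 * (π / (2 * x)) := by field_simp
    rw [integral_neg, integral_gaussian_Ioi, hsq, sqrt_mul (by norm_num), sqrt_sq zero_le_two,
      mul_div_cancel_left₀ _ two_ne_zero]
  have hC : Ccal x = fun y => ∫ v in Ioi 0, v * exp (-y / v) * exp (-(x / 2) * v ^ 2) := by
    funext y
    simp only [Ccal, hfactor]
  rw [hC, ← hgauss]
  refine hasDerivWithinAt_integral_of_dominated (hint le_rfl) (fun y hy => hint hy)
    (fun y hy => ae_restrict_of_forall_mem measurableSet_Ioi fun v hv => ?_)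
    (integrable_exp_neg_mul_sq (half_pos hx)).integrableOn
    (ae_restrict_of_forall_mem measurableSet_Ioi fun v hv => ?_)
  · have hdiff : v * exp (-y / v) * exp (-(x / 2) * v ^ 2) -
        v * exp (-0 / v) * exp (-(x / 2) * v ^ 2) =
        exp (-(x / 2) * v ^ 2) * (v * (exp (-y / v) - 1)) := by
      simp only [neg_zero, zero_div, exp_zero]; ring
    rw [hdiff, norm_mul, norm_of_nonneg (exp_pos _).le, sub_zero, abs_of_nonneg hy]
    gcongr
    exact abs_mul_exp_neg_div_sub_one_le hv hy
  · have hderiv : HasDerivAt (fun y : ℝ => v * exp (-y / v)) (v * (exp (-0 / v) * (-1 / v))) 0 :=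
      (((hasDerivAt_id (0 : ℝ)).neg.div_const v).exp).const_mul v
    refine (hderiv.mul_const _).hasDerivWithinAt.congr_deriv ?_
    have hv' : v ≠ 0 := (mem_Ioi.1 hv).ne'
    simp only [neg_zero, zero_div, exp_zero]
    field_simp

lemma tendsto_Ccal_atTop {η : ℝ} (hη : 0 ≤ η) : Tendsto (Ccal · η) (𝓝[>] 0) atTop := by
  refine tendsto_atTop_mono' _ ?_
    (tendsto_inv_nhdsGT_zero.const_mul_atTop (Ccal_pos one_pos hη))
  filter_upwards [Ioc_mem_nhdsGT one_pos] with x hx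
  rw [Ccal_eq_div hx.1, div_eq_mul_inv]
  gcongr
  · exact inv_nonneg.2 hx.1.le
  · exact Ccal_le_Ccal one_pos le_rfl (by positivity)
      (mul_le_of_le_one_right hη (sqrt_le_one.2 hx.2))

lemma hasDerivWithinAt_log_Ccal_ray {x s : ℝ} (hx : 0 < x) (hs : 0 ≤ s) (σ : ℝ) :
    HasDerivWithinAt (fun t => log (Ccal (x + σ * t) (s * t)))
      (-σ / x - s * √(π * x / 2)) (Ici 0) 0 := by
  have hline : HasDerivAt (fun t => x + σ * t) σ 0 := by
    simpa using ((hasDerivAt_id (0 : ℝ)).const_mul σ).const_add x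
  have hline₀ : x + σ * 0 ≠ 0 := by simpa using hx.ne'
  have harg : HasDerivAt (fun t => s * t * √(x + σ * t)) (s * √x) 0 := by
    simpa using ((hasDerivAt_id' (0 : ℝ)).const_mul s).fun_mul (hline.sqrt hline₀)
  have hC : HasDerivWithinAt (fun t => Ccal 1 (s * t * √(x + σ * t)))
      (-√(π / (2 * 1)) * (s * √x)) (Ici 0) 0 := by
    refine HasDerivWithinAt.comp (h₂ := Ccal 1) (s' := Ici 0) 0 ?_ harg.hasDerivWithinAt fun t ht =>
      mul_nonneg (mul_nonneg hs ht) (sqrt_nonneg _)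
    simpa only [mul_zero, zero_mul] using hasDerivWithinAt_Ccal_zero one_pos
  have hC₀ : Ccal 1 (s * 0 * √(x + σ * 0)) = 1 := by simp [Ccal_zero_right]
  have hlog : ∀ t ∈ Ici (0 : ℝ), 0 < x + σ * t → log (Ccal (x + σ * t) (s * t)) =
      log (Ccal 1 (s * t * √(x + σ * t))) - log (x + σ * t) := fun t ht hxt => by
    rw [Ccal_eq_div hxt, log_div (Ccal_pos one_pos ?_).ne' hxt.ne']
    exact mul_nonneg (mul_nonneg hs ht) (sqrt_nonneg _)
  have hpos : ∀ᶠ t in 𝓝[≥] (0 : ℝ), 0 < x + σ * t :=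
    nhdsWithin_le_nhds (hline.continuousAt.eventually_const_lt (by simpa using hx))
  have hsub := (hC.log (by rw [hC₀]; exact one_ne_zero)).sub (hline.hasDerivWithinAt.log hline₀)
  refine (hsub.congr_of_eventuallyEq_of_mem ?_ self_mem_Ici).congr_deriv ?_
  · filter_upwards [hpos, self_mem_nhdsWithin] with t hxt ht using hlog t ht hxt
  · rw [hC₀, mul_div_right_comm π x 2, sqrt_mul (by positivity)]
    simp only [mul_zero, add_zero, mul_one, div_one]
    ring

lemma Fcal_zero_zero {βL βR : ℝ} (hL : 0 < βL) (hR : 0 < βR) : Fcal βL βR 0 0 = 1 := by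
  rw [Fcal, add_zero, sub_zero, Ccal_zero_right hL, Ccal_zero_right hR]
  field_simp

lemma Fcal_const_sub (βL βR lam η : ℝ) :
    Fcal βL βR (βL - βR - lam) η = Fcal βL βR lam η := by
  rw [Fcal, Fcal, show βR + (βL - βR - lam) = βL - lam by ring,
    show βL - (βL - βR - lam) = βR + lam by ring, mul_right_comm]

section

variable {βL βR lam η : ℝ} (hL : 0 < βL) (hR : 0 < βR)

include hL hR

lemma Fcal_pos (hlam : lam ∈ Ioo (-βR) βL) (hη : 0 ≤ η) : 0 < Fcal βL βR lam η :=
  mul_pos (mul_pos (mul_pos hL hR) (Ccal_pos (neg_lt_iff_pos_add'.1 hlam.1) hη))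
    (Ccal_pos (sub_pos.2 hlam.2) hη)

lemma log_Fcal (hlam : lam ∈ Ioo (-βR) βL) (hη : 0 ≤ η) :
    log (Fcal βL βR lam η) =
      log (βL * βR) + log (Ccal (βR + lam) η) + log (Ccal (βL - lam) η) := by
  have hCR := Ccal_pos (neg_lt_iff_pos_add'.1 hlam.1) hη
  have hCL := Ccal_pos (sub_pos.2 hlam.2) hη
  rw [Fcal, log_mul (by positivity) hCL.ne', log_mul (by positivity) hCR.ne']

lemma antitoneOn_Fcal (hlam : lam ∈ Ioo (-βR) βL) : AntitoneOn (Fcal βL βR lam) (Ici 0) := by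
  intro η hη η' hη' hle
  have hposR : 0 < βR + lam := neg_lt_iff_pos_add'.1 hlam.1
  have hposL : 0 < βL - lam := sub_pos.2 hlam.2
  unfold Fcal
  gcongr
  · exact (Ccal_pos hposL hη').le
  · exact mul_nonneg (by positivity) (Ccal_pos hposR hη).le
  · exact Ccal_le_Ccal hposR le_rfl hη hle
  · exact Ccal_le_Ccal hposL le_rfl hη hle

lemma strictConvexOn_log_Fcal :
    StrictConvexOn ℝ (Ioo (-βR) βL ×ˢ Ici 0) fun p : ℝ × ℝ => log (Fcal βL βR p.1 p.2) := by
  have hconv : Convex ℝ (Ioo (-βR) βL ×ˢ Ici (0 : ℝ)) := (convex_Ioo _ _).prod (convex_Ici 0)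
  refine ⟨hconv, ?_⟩
  rintro ⟨l₁, η₁⟩ h₁ ⟨l₂, η₂⟩ h₂ hne a b ha hb hab
  obtain ⟨hl, hη⟩ := hconv h₁ h₂ ha.le hb.le hab
  have hCR := strictConvexOn_log_Ccal.2 (x := (βR + l₁, η₁)) (y := (βR + l₂, η₂))
    ⟨neg_lt_iff_pos_add'.1 h₁.1.1, h₁.2⟩ ⟨neg_lt_iff_pos_add'.1 h₂.1.1, h₂.2⟩
    (by simpa using hne) ha hb hab
  have hCL := strictConvexOn_log_Ccal.2 (x := (βL - l₁, η₁)) (y := (βL - l₂, η₂))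
    ⟨sub_pos.2 h₁.1.2, h₁.2⟩ ⟨sub_pos.2 h₂.1.2, h₂.2⟩ (by simpa using hne) ha hb hab
  simp only [Prod.smul_mk, Prod.mk_add_mk, smul_eq_mul] at hl hη hCR hCL ⊢
  rw [show a * (βR + l₁) + b * (βR + l₂) = βR + (a * l₁ + b * l₂) by
    linear_combination βR * hab] at hCR
  rw [show a * (βL - l₁) + b * (βL - l₂) = βL - (a * l₁ + b * l₂) by
    linear_combination βL * hab] at hCL
  rw [log_Fcal hL hR hl hη, log_Fcal hL hR h₁.1 h₁.2, log_Fcal hL hR h₂.1 h₂.2]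
  linear_combination hCR + hCL - log (βL * βR) * hab

lemma tendsto_Fcal_atTop (hη : 0 ≤ η) : Tendsto (Fcal βL βR · η) (𝓝[<] βL) atTop := by
  have hsub : Tendsto (βL - ·) (𝓝[<] βL) (𝓝[>] 0) := by
    refine tendsto_nhdsWithin_iff.2
      ⟨?_, eventually_mem_nhdsWithin.mono fun lam hlam => mem_Ioi.2 (sub_pos.2 hlam)⟩
    exact (Continuous.tendsto' (by fun_prop) _ _ (sub_self βL)).mono_left nhdsWithin_le_nhds
  have hc : 0 < βL * βR * Ccal (βR + βL) η :=
    mul_pos (mul_pos hL hR) (Ccal_pos (add_pos hR hL) hη)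
  refine tendsto_atTop_mono' _ ?_ (((tendsto_Ccal_atTop hη).comp hsub).const_mul_atTop hc)
  filter_upwards [Ioo_mem_nhdsLT hL] with lam hlam
  have hCL := Ccal_pos (sub_pos.2 hlam.2) hη
  have hCR : Ccal (βR + βL) η ≤ Ccal (βR + lam) η :=
    Ccal_le_Ccal (add_pos hR hlam.1) (by linarith [hlam.2]) hη le_rfl
  simp only [Function.comp_apply, Fcal]
  gcongr

end

/-- The conductivity `κ` of the paper. -/
noncomputable def conductivity (βL βR : ℝ) : ℝ := (√(π * βL / 2) + √(π * βR / 2))⁻¹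

lemma conductivity_pos {βL βR : ℝ} (hL : 0 < βL) : 0 < conductivity βL βR := by
  unfold conductivity; positivity

lemma tendsto_log_Fcal_ray_div {βL βR s : ℝ} (hL : 0 < βL) (hR : 0 < βR) (hs : 0 ≤ s) :
    Tendsto (fun t => log (Fcal βL βR t (s * t)) / t) (𝓝[>] 0)
      (𝓝 (1 / βL - 1 / βR - s * (conductivity βL βR)⁻¹)) := by
  have hderiv := (((hasDerivWithinAt_log_Ccal_ray hR hs 1).const_add (log (βL * βR))).fun_add
    (hasDerivWithinAt_log_Ccal_ray hL hs (-1))).mono Ioi_subset_Ici_self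
  have hslope := (hasDerivWithinAt_iff_tendsto_slope' self_notMem_Ioi).1 hderiv
  have hlog : ∀ t ∈ Ico 0 βL, log (βL * βR) + log (Ccal (βR + 1 * t) (s * t)) +
      log (Ccal (βL + -1 * t) (s * t)) = log (Fcal βL βR t (s * t)) := fun t ht => by
    rw [log_Fcal hL hR ⟨by linarith [ht.1], ht.2⟩ (mul_nonneg hs ht.1), one_mul, neg_one_mul,
      sub_eq_add_neg]
  refine (hslope.congr' ?_).trans_eq ?_
  · filter_upwards [Ioo_mem_nhdsGT hL] with t ht
    rw [slope_def_field, hlog t (Ioo_subset_Ico_self ht), hlog 0 (left_mem_Ico.2 hL), mul_zero,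
      Fcal_zero_zero hL hR, log_one, sub_zero, sub_zero]
  · rw [conductivity, inv_inv]
    ring_nf

/-- `f` is a branch over `s` of the curve `F(λ, η) = 1`, as is the cumulant generating function.
The value `η = 0` is admitted so that the branch over `(0, β_L)` can be continued to `λ = 0`. -/
def IsCgfOn (βL βR : ℝ) (f : ℝ → ℝ) (s : Set ℝ) : Prop :=
  ∀ lam ∈ s, 0 ≤ f lam ∧ Fcal βL βR lam (f lam) = 1

namespace IsCgfOn

variable {βL βR lam η : ℝ} {f : ℝ → ℝ} {s : Set ℝ}

lemma update_zero (hL : 0 < βL) (hR : 0 < βR) (hf : IsCgfOn βL βR f (Ioo 0 βL)) :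
    IsCgfOn βL βR (Function.update f 0 0) (Ico 0 βL) := by
  intro lam hlam
  obtain rfl | hpos := hlam.1.eq_or_lt
  · simp [Fcal_zero_zero hL hR]
  · simpa [hpos.ne'] using hf lam ⟨hpos, hlam.2⟩

lemma comp_const_sub (hf : IsCgfOn βL βR f s) :
    IsCgfOn βL βR (fun lam => f (βL - βR - lam)) ((βL - βR - ·) ⁻¹' s) := fun lam hlam => by
  simpa only [Fcal_const_sub] using hf _ hlam

lemma lt_of_one_lt_Fcal (hf : IsCgfOn βL βR f s) (hL : 0 < βL) (hR : 0 < βR) (hlam : lam ∈ s)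
    (hlam' : lam ∈ Ioo (-βR) βL) (hη : 0 ≤ η) (h : 1 < Fcal βL βR lam η) : η < f lam :=
  (antitoneOn_Fcal hL hR hlam').reflect_lt (hf lam hlam).1 hη (by rwa [(hf lam hlam).2])

lemma lt_of_Fcal_lt_one (hf : IsCgfOn βL βR f s) (hL : 0 < βL) (hR : 0 < βR) (hlam : lam ∈ s)
    (hlam' : lam ∈ Ioo (-βR) βL) (hη : 0 ≤ η) (h : Fcal βL βR lam η < 1) : f lam < η :=
  (antitoneOn_Fcal hL hR hlam').reflect_lt hη (hf lam hlam).1 (by rwa [(hf lam hlam).2])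

lemma strictConvexOn (hf : IsCgfOn βL βR f s) (hL : 0 < βL) (hR : 0 < βR)
    (hs : s ⊆ Ioo (-βR) βL) (hconv : Convex ℝ s) : StrictConvexOn ℝ s f := by
  refine strictConvexOn_of_comp_eq_const (t := Ici 0) (c := 0)
    ((strictConvexOn_log_Fcal hL hR).subset (prod_mono_left hs) (hconv.prod (convex_Ici 0)))
    (fun lam hlam η hη η' hη' hle => ?_) (fun lam hlam => (hf lam hlam).1) fun lam hlam => ?_
  · exact log_le_log (Fcal_pos hL hR (hs hlam) hη') (antitoneOn_Fcal hL hR (hs hlam) hη hη' hle)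
  · simp only [(hf lam hlam).2, log_one]

lemma tendsto_atTop (hf : IsCgfOn βL βR f (Ioo 0 βL)) (hL : 0 < βL) (hR : 0 < βR) :
    Tendsto f (𝓝[<] βL) atTop := by
  refine Filter.tendsto_atTop.2 fun M => ?_
  filter_upwards [Ioo_mem_nhdsLT hL,
    (tendsto_Fcal_atTop hL hR (le_max_right M 0)).eventually_gt_atTop 1] with lam hlam hF
  exact (le_max_left M 0).trans (hf.lt_of_one_lt_Fcal hL hR hlam
    ⟨by linarith [hlam.1], hlam.2⟩ (le_max_right M 0) hF).le

lemma tendsto_div (hf : IsCgfOn βL βR f (Ioo 0 βL)) (hL : 0 < βL) (hLR : βL ≤ βR) :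
    Tendsto (fun lam => f lam / lam) (𝓝[>] 0)
      (𝓝 (conductivity βL βR * (1 / βL - 1 / βR))) := by
  have hR : 0 < βR := hL.trans_le hLR
  have hκ : 0 < conductivity βL βR := conductivity_pos hL
  refine tendsto_order.2 ⟨fun s hs => ?_, fun s hs => ?_⟩
  · rcases lt_or_ge s 0 with hneg | hs₀
    -- The ray of slope `s < 0` leaves the half-plane `η ≥ 0`, but there `f ≥ 0` is enough.
    · filter_upwards [Ioo_mem_nhdsGT hL] with t ht
      exact hneg.trans_le (div_nonneg (hf t ht).1 ht.1.le)
    have hlim : 0 < 1 / βL - 1 / βR - s * (conductivity βL βR)⁻¹ := by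
      rw [← div_eq_mul_inv, sub_pos, div_lt_iff₀ hκ]
      linarith
    filter_upwards [(tendsto_log_Fcal_ray_div hL hR hs₀).eventually_const_lt hlim,
      Ioo_mem_nhdsGT hL] with t hlog ht
    have ht' : t ∈ Ioo (-βR) βL := ⟨by linarith [ht.1], ht.2⟩
    have hst : 0 ≤ s * t := mul_nonneg hs₀ ht.1.le
    rw [div_pos_iff_of_pos_right ht.1, log_pos_iff (Fcal_pos hL hR ht' hst).le] at hlog
    exact (lt_div_iff₀ ht.1).2 (hf.lt_of_one_lt_Fcal hL hR ht ht' hst hlog)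
  · have hs₀ : 0 ≤ s := le_trans
      (mul_nonneg hκ.le (sub_nonneg.2 (one_div_le_one_div_of_le hL hLR))) hs.le
    have hlim : 1 / βL - 1 / βR - s * (conductivity βL βR)⁻¹ < 0 := by
      rw [← div_eq_mul_inv, sub_neg, lt_div_iff₀ hκ]
      linarith
    filter_upwards [(tendsto_log_Fcal_ray_div hL hR hs₀).eventually_lt_const hlim,
      Ioo_mem_nhdsGT hL] with t hlog ht
    have ht' : t ∈ Ioo (-βR) βL := ⟨by linarith [ht.1], ht.2⟩
    have hst : 0 ≤ s * t := mul_nonneg hs₀ ht.1.le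
    rw [div_lt_iff₀ ht.1, zero_mul, log_neg_iff (Fcal_pos hL hR ht' hst)] at hlog
    exact (div_lt_iff₀ ht.1).2 (hf.lt_of_Fcal_lt_one hL hR ht ht' hst hlog)

lemma bijOn_deriv (hf : IsCgfOn βL βR f (Ioo 0 βL)) (hL : 0 < βL) (hLR : βL ≤ βR)
    (hd : ∀ lam ∈ Ioo 0 βL, DifferentiableAt ℝ f lam) :
    BijOn (deriv f) (Ioo 0 βL) (Ioi (conductivity βL βR * (1 / βL - 1 / βR))) := by
  have hR : 0 < βR := hL.trans_le hLR
  set g := Function.update f 0 0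
  have hg : IsCgfOn βL βR g (Ico 0 βL) := hf.update_zero hL hR
  have hg' : IsCgfOn βL βR g (Ioo 0 βL) := fun lam hlam => hg lam (Ioo_subset_Ico_self hlam)
  have hgf : ∀ lam ∈ Ioo 0 βL, g =ᶠ[𝓝 lam] f := fun lam hlam =>
    (isOpen_compl_singleton.eventually_mem hlam.1.ne').mono fun x hx => Function.update_of_ne hx 0 f
  have hg_zero : HasDerivWithinAt g (conductivity βL βR * (1 / βL - 1 / βR)) (Ioi 0) 0 := by
    rw [hasDerivWithinAt_iff_tendsto_slope' self_notMem_Ioi]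
    refine (hg'.tendsto_div hL hLR).congr fun lam => ?_
    simp [slope_def_field, g]
  refine (bijOn_deriv_of_strictConvexOn hL ?_ (fun lam hlam => ?_) hg_zero
    (hg'.tendsto_atTop hL hR)).congr fun lam hlam => (hgf lam hlam).deriv_eq
  · exact hg.strictConvexOn hL hR (Ico_subset_Ioo_left (neg_lt_zero.2 hR)) (convex_Ico 0 βL)
  · exact (hgf lam hlam).differentiableAt_iff.2 (hd lam hlam)

end IsCgfOn

/-- With `f(λ)` the unique positive solution of `F(λ, f(λ)) = 1` on
`(−β_R, β_L−β_R) ∪ (0, β_L)`, the derivative `f'` is a bijection from `(0, β_L)` onto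
`(κ(T_L−T_R), ∞)` and a bijection from `(−β_R, β_L−β_R)` onto `(−∞, −κ(T_L−T_R))`. -/
theorem deriv_cgf_bijective
    (βL βR TL TR κ : ℝ) (hβL : 0 < βL) (hLR : βL ≤ βR)
    (hTL : TL = 1 / βL) (hTR : TR = 1 / βR)
    (hκ : κ = (Real.sqrt (Real.pi * βL / 2) + Real.sqrt (Real.pi * βR / 2))⁻¹)
    (f : ℝ → ℝ)
    (hf : ∀ lam ∈ Set.Ioo (-βR) (βL - βR) ∪ Set.Ioo 0 βL,
      0 < f lam ∧ Fcal βL βR lam (f lam) = 1)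
    (hdiff : ∀ lam ∈ Set.Ioo (-βR) (βL - βR) ∪ Set.Ioo 0 βL,
      DifferentiableAt ℝ f lam) :
    Set.BijOn (deriv f) (Set.Ioo 0 βL) (Set.Ioi (κ * (TL - TR))) ∧
      Set.BijOn (deriv f) (Set.Ioo (-βR) (βL - βR)) (Set.Iio (-(κ * (TL - TR)))) := by
  subst hTL hTR hκ
  have hR : IsCgfOn βL βR f (Set.Ioo 0 βL) := fun lam hlam =>
    ⟨(hf lam (.inr hlam)).1.le, (hf lam (.inr hlam)).2⟩
  have hL : IsCgfOn βL βR f (Set.Ioo (-βR) (βL - βR)) := fun lam hlam =>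
    ⟨(hf lam (.inl hlam)).1.le, (hf lam (.inl hlam)).2⟩
  refine ⟨hR.bijOn_deriv hβL hLR fun lam hlam => hdiff lam (.inr hlam), ?_⟩
  have hpre : (βL - βR - ·) ⁻¹' Set.Ioo (-βR) (βL - βR) = Set.Ioo 0 βL := by simp
  have hreflect := (hpre ▸ hL.comp_const_sub).bijOn_deriv hβL hLR fun lam hlam =>
    (hdiff _ (.inl (hpre.ge hlam))).comp lam (by fun_prop)
  simpa [conductivity] using bijOn_deriv_of_comp_const_sub hreflect
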